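/- Every Hamiltonian tour of the instance I³_{i,j,k} (with distances given by the 1-norm in ℝ³) has length at least 4 + 2/(i+1) + 2/(j+1) + 2/(k+1). -/

import Mathlib

open scoped Classical

/-- Manhattan (1-norm) distance in `ℝ³`. -/
noncomputable def dist1 (p q : ℝ × ℝ × ℝ) : ℝ :=
  |p.1 - q.1| + |p.2.1 - q.2.1| + |p.2.2 - q.2.2|

/-- The vertices `X_s` of the instance `I³_{i,j,k}`. -/
noncomputable def ptX (i s : ℕ) : ℝ × ℝ × ℝ := (0, 0, (s : ℝ) / ((i : ℝ) + 1))

/-- The vertices `Y_s` of the instance `I³_{i,j,k}`. -/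
noncomputable def ptY (i j s : ℕ) : ℝ × ℝ × ℝ :=
  (1 / ((i : ℝ) + 1) + 1 / ((j : ℝ) + 1), 0, (s : ℝ) / ((j : ℝ) + 1))

/-- The vertices `Z_s` of the instance `I³_{i,j,k}`. -/
noncomputable def ptZ (i k s : ℕ) : ℝ × ℝ × ℝ :=
  (1 / ((i : ℝ) + 1), 1 / ((k : ℝ) + 1), (s : ℝ) / ((k : ℝ) + 1))

/-- The point set of the instance `I³_{i,j,k}`. -/
noncomputable def I3pts (i j k : ℕ) : Finset (ℝ × ℝ × ℝ) :=
  (Finset.range (i + 2)).image (ptX i) ∪ (Finset.range (j + 2)).image (ptY i j) ∪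
    (Finset.range (k + 2)).image (ptZ i k)

/-- The length of the closed tour visiting the entries of `L` in cyclic order,
with respect to the distance function `d`. -/
def cycleLength {α : Type*} (d : α → α → ℝ) (L : List α) : ℝ :=
  ((L.zip (L.rotate 1)).map (fun p => d p.1 p.2)).sum

/-- number of edges of the closed walk crossing the cut `S`. -/
noncomputable def cutNum (n : ℕ) {V : Type} (v : ℕ → V) (S : V → Prop) : ℕ :=
  ((Finset.range n).filter (fun t => ¬ (S (v t) ↔ S (v (t + 1))))).card

lemma cut_parity {V : Type} (v : ℕ → V) (S : V → Prop) (n : ℕ) :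
    Even (cutNum n v S) ↔ (S (v 0) ↔ S (v n)) := by
  induction n with
  | zero => simp [cutNum]
  | succ n ih =>
    unfold cutNum at ih ⊢
    rw [Finset.range_add_one, Finset.filter_insert]
    split_ifs with h
    · rw [ih]; tauto
    · rw [Finset.card_insert_of_notMem (by simp), Nat.even_add_one, ih]; tauto

lemma cut_even {V : Type} (v : ℕ → V) (S : V → Prop) (n : ℕ) (h : v n = v 0) :
    Even (cutNum n v S) := by
  rw [cut_parity, h]

lemma cut_two {V : Type} (v : ℕ → V) (S : V → Prop) (n : ℕ) (h : v n = v 0)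
    (h1 : ∃ t < n, S (v t)) (h2 : ∃ t < n, ¬ S (v t)) : 2 ≤ cutNum n v S := by
  have he := cut_even v S n h
  have hpos : cutNum n v S ≠ 0 := by
    intro h0
    unfold cutNum at h0
    rw [Finset.card_eq_zero, Finset.filter_eq_empty_iff] at h0
    have hc : ∀ t, t ≤ n → (S (v t) ↔ S (v 0)) := by
      intro t
      induction t with
      | zero => simp
      | succ t ih =>
        intro ht
        have := h0 (x := t) (by simp; omega)
        have := ih (by omega)
        tauto
    obtain ⟨t, ht, h1⟩ := h1
    obtain ⟨t', ht', h2⟩ := h2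
    have := hc t ht.le
    have := hc t' ht'.le
    tauto
  obtain ⟨r, hr⟩ := he
  omega

/-- no edge inside column `c` crosses the gap above index `s`. -/
def zeroGap (n : ℕ) (v : ℕ → Fin 3 × ℕ) (c : Fin 3) (s : ℕ) : Prop :=
  ∀ t < n, (v t).1 = c → (v (t + 1)).1 = c → ((v t).2 ≤ s ↔ (v (t + 1)).2 ≤ s)

/-- block of column `c` ending at the gap `s`. -/
def blk (n : ℕ) (v : ℕ → Fin 3 × ℕ) (c : Fin 3) (s : ℕ) (u : Fin 3 × ℕ) : Prop :=
  u.1 = c ∧ u.2 ≤ s ∧ ∀ s', s' < s → zeroGap n v c s' → s' < u.2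

lemma blk_unique {n : ℕ} {v : ℕ → Fin 3 × ℕ} {c : Fin 3} {s s' : ℕ} {u : Fin 3 × ℕ}
    (hs : zeroGap n v c s) (hs' : zeroGap n v c s')
    (h : blk n v c s u) (h' : blk n v c s' u) : s = s' := by
  obtain ⟨_, h2, h3⟩ := h
  obtain ⟨_, h2', h3'⟩ := h'
  rcases lt_trichotomy s s' with hl | hl | hl
  · have := h3' s hl hs; omega
  · exact hl
  · have := h3 s' hl hs'; omega

lemma blk_cut {n : ℕ} {v : ℕ → Fin 3 × ℕ} {c : Fin 3} {s t : ℕ} (ht : t < n)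
    (hs : zeroGap n v c s) (h : ¬ (blk n v c s (v t) ↔ blk n v c s (v (t + 1)))) :
    ¬ ((v t).1 = c ↔ (v (t + 1)).1 = c) := by
  intro hc
  by_cases h1 : (v t).1 = c
  · have h2 := hc.1 h1
    apply h
    unfold blk
    have e := hs t ht h1 h2
    have e' : ∀ s', zeroGap n v c s' → (s' < (v t).2 ↔ s' < (v (t+1)).2) := by
      intro s' hz
      have := hz t ht h1 h2
      omega
    constructor
    · rintro ⟨_, b, d⟩
      exact ⟨h2, e.1 b, fun s' hl hz => (e' s' hz).1 (d s' hl hz)⟩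
    · rintro ⟨_, b, d⟩
      exact ⟨h1, e.2 b, fun s' hl hz => (e' s' hz).2 (d s' hl hz)⟩
  · have h2 : ¬ (v (t + 1)).1 = c := fun h => h1 (hc.2 h)
    apply h
    unfold blk
    tauto

lemma H_bound (K : Fin 3 → ℕ) (v : ℕ → Fin 3 × ℕ) (n : ℕ) (hv : v n = v 0)
    (hvalid : ∀ t, (v t).2 ≤ K (v t).1)
    (hcov : ∀ c s, s ≤ K c → ∃ t < n, v t = (c, s)) (c : Fin 3) :
    2 + 2 * ((Finset.range (K c)).filter (zeroGap n v c)).card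
      ≤ cutNum n v (fun u => u.1 = c) := by
  have hK : zeroGap n v c (K c) := by
    intro t _ h1 h2
    have a := hvalid t
    have b := hvalid (t + 1)
    rw [h1] at a
    rw [h2] at b
    tauto
  have e1 : 2 + 2 * ((Finset.range (K c)).filter (zeroGap n v c)).card =
      2 * ((Finset.range (K c + 1)).filter (zeroGap n v c)).card := by
    rw [Finset.range_add_one, Finset.filter_insert, if_pos hK,
      Finset.card_insert_of_notMem (by simp)]
    ring
  rw [e1]
  set Z := (Finset.range (K c + 1)).filter (zeroGap n v c) with hZ
  have hd : Set.PairwiseDisjoint (Z : Set ℕ) (fun s => (Finset.range n).filter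
      (fun t => ¬ (blk n v c s (v t) ↔ blk n v c s (v (t + 1))))) := by
    intro s hs s' hs' hne
    simp only [hZ, Finset.coe_filter, Set.mem_ofPred_eq] at hs hs'
    simp only [Function.onFun]
    rw [Finset.disjoint_left]
    intro t h1 h2
    simp only [Finset.mem_filter, Finset.mem_range] at h1 h2
    have hc := blk_cut h1.1 hs.2 h1.2
    have k1 := h1.2
    have k2 := h2.2
    apply hne
    have n1 : ∀ {s u}, blk n v c s u → u.1 = c := fun h => h.1
    by_cases a1 : blk n v c s (v t)
    · by_cases a2 : blk n v c s' (v t)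
      · exact blk_unique hs.2 hs'.2 a1 a2
      · have a3 : blk n v c s' (v (t+1)) := by tauto
        have := n1 a1; have := n1 a3; tauto
    · have a1' : blk n v c s (v (t+1)) := by tauto
      by_cases a2 : blk n v c s' (v t)
      · have := n1 a1'; have := n1 a2; tauto
      · have a3 : blk n v c s' (v (t+1)) := by tauto
        exact blk_unique hs.2 hs'.2 a1' a3
  have hsub : (Z.biUnion (fun s => (Finset.range n).filter
      (fun t => ¬ (blk n v c s (v t) ↔ blk n v c s (v (t + 1)))))) ⊆
      (Finset.range n).filter (fun t => ¬ ((v t).1 = c ↔ (v (t + 1)).1 = c)) := by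
    intro t ht
    simp only [Finset.mem_biUnion, Finset.mem_filter, Finset.mem_range, hZ] at ht ⊢
    obtain ⟨s, hs, ht, h⟩ := ht
    exact ⟨ht, blk_cut ht hs.2 h⟩
  have hcard := Finset.card_le_card hsub
  rw [Finset.card_biUnion hd] at hcard
  have hcard2 : ∑ s ∈ Z, cutNum n v (blk n v c s) ≤ cutNum n v (fun u => u.1 = c) := by
    unfold cutNum
    convert hcard
  refine le_trans ?_ hcard2
  rw [mul_comm, ← smul_eq_mul, ← Finset.sum_const]
  apply Finset.sum_le_sum
  intro s hs
  simp only [hZ, Finset.mem_filter, Finset.mem_range] at hs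
  apply cut_two v (blk n v c s) n hv
  · obtain ⟨t, ht, e⟩ := hcov c s (by omega)
    refine ⟨t, ht, ?_⟩
    rw [e]
    exact ⟨rfl, le_rfl, fun s' h _ => h⟩
  · obtain ⟨t, ht, e⟩ := hcov (c + 1) 0 (by omega)
    refine ⟨t, ht, ?_⟩
    rw [e]
    intro h
    have := h.1
    revert this
    fin_cases c <;> simp

lemma V_bound (A : Fin 3 → ℕ) (hA : ∀ c, 0 < A c) (v : ℕ → Fin 3 × ℕ) (n : ℕ)
    (hv : v n = v 0) (m : ℕ) :
    4 ≤ cutNum n v (fun u => u.2 * A u.1 ≤ m) +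
      ∑ c, 2 * (if zeroGap n v c (m / A c) then 1 else 0) := by
  have he := cut_even v (fun u => u.2 * A u.1 ≤ m) n hv
  have hex : ∑ c : Fin 3, (if zeroGap n v c (m / A c) then 0 else 1) ≤
      cutNum n v (fun u => u.2 * A u.1 ≤ m) := by
    have : ∀ c : Fin 3, (if zeroGap n v c (m / A c) then 0 else 1) ≤
      (((Finset.range n).filter (fun t => ¬ ((v t).2 * A (v t).1 ≤ m ↔
        (v (t+1)).2 * A (v (t+1)).1 ≤ m))).filter (fun t => (v t).1 = c)).card := by
      intro c
      split_ifs with h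
      · omega
      · rw [Nat.one_le_iff_ne_zero, Finset.card_ne_zero]
        unfold zeroGap at h
        push Not at h
        obtain ⟨t, ht, h1, h2, h3⟩ := h
        refine ⟨t, ?_⟩
        simp only [Finset.mem_filter, Finset.mem_range]
        refine ⟨⟨ht, ?_⟩, h1⟩
        rw [h1, h2, ← Nat.le_div_iff_mul_le (hA c), ← Nat.le_div_iff_mul_le (hA c)]
        intro h4
        rcases h3 with h3 | h3 <;> omega
    refine (Finset.sum_le_sum fun c _ => this c).trans ?_
    unfold cutNum
    rw [← Finset.card_eq_sum_card_fiberwise (fun _ _ => by simp)]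
    apply le_of_eq
    congr
  obtain ⟨r, hr⟩ := he
  rw [Fin.sum_univ_three] at *
  split_ifs at * <;> omega

lemma sum_div (A : ℕ) (hA : 0 < A) (f : ℕ → ℕ) (K : ℕ) :
    ∑ m ∈ Finset.range (K * A), f (m / A) = A * ∑ s ∈ Finset.range K, f s := by
  induction K with
  | zero => simp
  | succ K ih =>
    rw [Nat.succ_mul, Finset.sum_range_add, ih, Finset.sum_range_succ, mul_add]
    congr 1
    rw [Finset.sum_congr rfl (g := fun _ => f K)]
    · simp
    · intro x hx
      rw [Finset.mem_range] at hx
      congr 1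
      rw [Nat.mul_comm, Nat.mul_add_div hA, Nat.div_eq_of_lt hx, add_zero]

lemma natdist_count (N x y : ℕ) (hx : x ≤ N) (hy : y ≤ N) :
    ∑ m ∈ Finset.range N, (if ¬ (x ≤ m ↔ y ≤ m) then 1 else 0) = (x - y) + (y - x) := by
  rw [← Finset.card_filter]
  have : (Finset.range N).filter (fun m => ¬ (x ≤ m ↔ y ≤ m)) =
      Finset.Ico (min x y) (max x y) := by
    ext m
    simp only [Finset.mem_filter, Finset.mem_range, Finset.mem_Ico]
    omega
  rw [this, Nat.card_Ico]
  omega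

/-- scaled distance. -/
def sdist (A : Fin 3 → ℕ) (u w : Fin 3 × ℕ) : ℕ :=
  ((u.2 * A u.1 - w.2 * A w.1) + (w.2 * A w.1 - u.2 * A u.1)) +
    if u.1 = w.1 then 0 else A u.1 + A w.1

lemma horiz (A : Fin 3 → ℕ) (a b : Fin 3) :
    (if a = b then 0 else A a + A b) =
      ∑ c, A c * (if ¬ (a = c ↔ b = c) then 1 else 0) := by
  rw [Fin.sum_univ_three]
  fin_cases a <;> fin_cases b <;> simp <;> ring

lemma core (K A : Fin 3 → ℕ) (N : ℕ) (hK : ∀ c, K c * A c = N) (hA : ∀ c, 0 < A c)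
    (v : ℕ → Fin 3 × ℕ) (n : ℕ) (hv : v n = v 0)
    (hvalid : ∀ t, (v t).2 ≤ K (v t).1)
    (hcov : ∀ c s, s ≤ K c → ∃ t < n, v t = (c, s)) :
    4 * N + 2 * ∑ c, A c ≤ ∑ t ∈ Finset.range n, sdist A (v t) (v (t + 1)) := by
  have hz : ∀ t, (v t).2 * A (v t).1 ≤ N := fun t => by
    rw [← hK (v t).1]; exact Nat.mul_le_mul_right _ (hvalid t)
  have e : ∑ t ∈ Finset.range n, sdist A (v t) (v (t + 1)) =
      ∑ m ∈ Finset.range N, cutNum n v (fun u => u.2 * A u.1 ≤ m) +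
      ∑ c, A c * cutNum n v (fun u => u.1 = c) := by
    unfold sdist cutNum
    rw [Finset.sum_add_distrib]
    congr 1
    · simp_rw [Finset.card_filter]
      rw [Finset.sum_comm]
      refine Finset.sum_congr rfl fun t _ => ?_
      rw [natdist_count N _ _ (hz _) (hz _)]
    · simp_rw [Finset.card_filter, Finset.mul_sum]
      rw [Finset.sum_comm]
      exact Finset.sum_congr rfl fun t _ => horiz A _ _
  rw [e]
  have h1 : ∑ c, A c * (2 + 2 * ((Finset.range (K c)).filter (zeroGap n v c)).card) ≤
      ∑ c, A c * cutNum n v (fun u => u.1 = c) :=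
    Finset.sum_le_sum fun c _ => Nat.mul_le_mul_left _ (H_bound K v n hv hvalid hcov c)
  have h2 : ∑ m ∈ Finset.range N, 4 ≤ _ :=
    Finset.sum_le_sum fun m _ => V_bound A hA v n hv m
  rw [Finset.sum_add_distrib, Finset.sum_comm (t := Finset.univ)] at h2
  have h3 : ∀ c, ∑ m ∈ Finset.range N, 2 * (if zeroGap n v c (m / A c) then 1 else 0) =
      A c * (2 * ((Finset.range (K c)).filter (zeroGap n v c)).card) := by
    intro c
    rw [← hK c, sum_div (A c) (hA c) (fun s => 2 * (if zeroGap n v c s then 1 else 0)),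
      ← Finset.mul_sum, Finset.card_filter]
  simp_rw [h3] at h2
  simp_rw [mul_add, Finset.sum_add_distrib, ← Finset.sum_mul] at h1
  simp only [Finset.sum_const, Finset.card_range, smul_eq_mul] at h2
  linarith

/-- The embedding of labelled vertices. -/
noncomputable def emb (i j k : ℕ) (u : Fin 3 × ℕ) : ℝ × ℝ × ℝ :=
  if u.1 = 0 then ptX i u.2 else if u.1 = 1 then ptY i j u.2 else ptZ i k u.2

lemma mem_I3 (i j k : ℕ) (p : ℝ × ℝ × ℝ) :
    p ∈ I3pts i j k ↔ ∃ u : Fin 3 × ℕ, u.2 ≤ (![i + 1, j + 1, k + 1] : Fin 3 → ℕ) u.1 ∧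
      emb i j k u = p := by
  simp only [I3pts, Finset.mem_union, Finset.mem_image, Finset.mem_range]
  constructor
  · rintro ((⟨s, hs, rfl⟩ | ⟨s, hs, rfl⟩) | ⟨s, hs, rfl⟩)
    · exact ⟨(0, s), by simp; omega, by simp [emb]⟩
    · exact ⟨(1, s), by simp; omega, by simp [emb]⟩
    · exact ⟨(2, s), by simp; omega, by simp [emb]⟩
  · rintro ⟨⟨c, s⟩, h, rfl⟩
    fin_cases c <;> simp [emb] at h ⊢
    · exact Or.inl (Or.inl ⟨s, by omega, rfl⟩)
    · exact Or.inl (Or.inr ⟨s, by omega, rfl⟩)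
    · exact Or.inr ⟨s, by omega, rfl⟩

lemma cast_natdist (x y : ℕ) : (((x - y) + (y - x) : ℕ) : ℝ) = |(x : ℝ) - y| := by
  rcases le_total x y with h | h
  · have h' : (x : ℝ) ≤ y := by exact_mod_cast h
    rw [Nat.sub_eq_zero_of_le h, zero_add, Nat.cast_sub h, abs_of_nonpos (by linarith)]; ring
  · have h' : (y : ℝ) ≤ x := by exact_mod_cast h
    rw [Nat.sub_eq_zero_of_le h, add_zero, Nat.cast_sub h, abs_of_nonneg (by linarith)]

lemma abs_scale (N x y : ℝ) (hN : 0 < N) : N * |x - y| = |N * x - N * y| := by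
  rw [← mul_sub, abs_mul, abs_of_pos hN]

lemma dist_emb (i j k : ℕ) (u w : Fin 3 × ℕ) :
    (((i + 1) * (j + 1) * (k + 1) : ℕ) : ℝ) * dist1 (emb i j k u) (emb i j k w) =
    (sdist ![(j + 1) * (k + 1), (i + 1) * (k + 1), (i + 1) * (j + 1)] u w : ℝ) := by
  have hi : (0 : ℝ) < (i : ℝ) + 1 := by positivity
  have hj : (0 : ℝ) < (j : ℝ) + 1 := by positivity
  have hk : (0 : ℝ) < (k : ℝ) + 1 := by positivity
  set N : ℝ := (((i + 1) * (j + 1) * (k + 1) : ℕ) : ℝ) with hN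
  have hN0 : 0 < N := by rw [hN]; push_cast; positivity
  have ez : ∀ u : Fin 3 × ℕ, N * (emb i j k u).2.2 = ((u.2 * (![(j + 1) * (k + 1),
      (i + 1) * (k + 1), (i + 1) * (j + 1)] : Fin 3 → ℕ) u.1 : ℕ) : ℝ) := by
    rintro ⟨c, s⟩
    fin_cases c <;> simp [emb, ptX, ptY, ptZ, hN] <;> field_simp
  have eh : N * (|(emb i j k u).1 - (emb i j k w).1| + |(emb i j k u).2.1 - (emb i j k w).2.1|)
      = ((if u.1 = w.1 then 0 else (![(j + 1) * (k + 1),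
      (i + 1) * (k + 1), (i + 1) * (j + 1)] : Fin 3 → ℕ) u.1 + (![(j + 1) * (k + 1),
      (i + 1) * (k + 1), (i + 1) * (j + 1)] : Fin 3 → ℕ) w.1 : ℕ) : ℝ) := by
    obtain ⟨c, s⟩ := u
    obtain ⟨d, r⟩ := w
    have pi : (0 : ℝ) < ((i : ℝ) + 1)⁻¹ := by positivity
    have pj : (0 : ℝ) < ((j : ℝ) + 1)⁻¹ := by positivity
    have pk : (0 : ℝ) < ((k : ℝ) + 1)⁻¹ := by positivity
    have a1 : |-((j : ℝ) + 1)⁻¹ + -((i : ℝ) + 1)⁻¹| = ((i : ℝ) + 1)⁻¹ + ((j : ℝ) + 1)⁻¹ := by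
      rw [abs_of_nonpos (by linarith)]; ring
    have a2 : |((i : ℝ) + 1)⁻¹ + ((j : ℝ) + 1)⁻¹| = ((i : ℝ) + 1)⁻¹ + ((j : ℝ) + 1)⁻¹ :=
      abs_of_pos (by linarith)
    have a3 : |((i : ℝ) + 1)⁻¹ - (((i : ℝ) + 1)⁻¹ + ((j : ℝ) + 1)⁻¹)| = ((j : ℝ) + 1)⁻¹ := by
      rw [abs_of_nonpos (by linarith)]; ring
    have b1 := abs_of_pos pi
    have b2 := abs_of_pos pj
    have b3 := abs_of_pos pk
    rw [abs_inv] at b1 b2 b3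
    fin_cases c <;> fin_cases d <;> simp [emb, ptX, ptY, ptZ, hN, a1, a2, a3, b1, b2, b3] <;>
      field_simp <;> ring
  unfold sdist
  rw [Nat.cast_add, ← eh, cast_natdist, ← ez u, ← ez w, ← abs_scale N _ _ hN0]
  unfold dist1
  ring

lemma emb_inj (i j k : ℕ) : Function.Injective (emb i j k) := by
  intro u w h
  have h1 := dist_emb i j k u w
  rw [h] at h1
  have h0 : dist1 (emb i j k w) (emb i j k w) = 0 := by simp [dist1]
  rw [h0, mul_zero] at h1
  have h2 : sdist ![(j + 1) * (k + 1), (i + 1) * (k + 1), (i + 1) * (j + 1)] u w = 0 := by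
    exact_mod_cast h1.symm
  have hA : ∀ c : Fin 3, 0 < (![(j + 1) * (k + 1), (i + 1) * (k + 1), (i + 1) * (j + 1)] :
      Fin 3 → ℕ) c := by
    intro c; fin_cases c <;> simp
  unfold sdist at h2
  obtain ⟨c, s⟩ := u
  obtain ⟨d, r⟩ := w
  have hcd : c = d := by
    by_contra hne
    simp only [hne, if_false] at h2
    have := hA c
    omega
  subst hcd
  have h3 : s * (![(j + 1) * (k + 1), (i + 1) * (k + 1), (i + 1) * (j + 1)] : Fin 3 → ℕ) c =
      r * (![(j + 1) * (k + 1), (i + 1) * (k + 1), (i + 1) * (j + 1)] : Fin 3 → ℕ) c := by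
    refine le_antisymm (a := s * (![(j + 1) * (k + 1), (i + 1) * (k + 1), (i + 1) * (j + 1)] :
      Fin 3 → ℕ) c) ?_ ?_ <;> · simp only at h2; omega
  rw [Nat.eq_of_mul_eq_mul_right (hA c) h3]

lemma cycle_sum {α : Type*} (d : α → α → ℝ) (L : List α) (p : ℕ → α)
    (hp : ∀ t, ∀ h : 0 < L.length, p t = L[t % L.length]'(Nat.mod_lt _ h)) :
    cycleLength d L = ∑ t ∈ Finset.range L.length, d (p t) (p (t + 1)) := by
  unfold cycleLength
  have : (L.zip (L.rotate 1)).map (fun p => d p.1 p.2) =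
      (List.range L.length).map (fun t => d (p t) (p (t + 1))) := by
    apply List.ext_getElem
    · simp
    · intro t h1 h2
      have ht : t < L.length := by simpa using h2
      have h0 : 0 < L.length := by omega
      simp [hp _ h0, List.getElem_rotate, Nat.mod_eq_of_lt ht]
  rw [this]
  rfl

/-- Every Hamiltonian tour of `I³_{i,j,k}` has length at least
`4 + 2/(i+1) + 2/(j+1) + 2/(k+1)`. -/
theorem I3_tour_lower_bound (i j k : ℕ) (L : List (ℝ × ℝ × ℝ))
    (hnodup : L.Nodup) (hcover : L.toFinset = I3pts i j k) :
    4 + 2 / ((i : ℝ) + 1) + 2 / ((j : ℝ) + 1) + 2 / ((k : ℝ) + 1) ≤ cycleLength dist1 L := by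
  have hL : ∀ p, p ∈ L ↔ p ∈ I3pts i j k := fun p => by rw [← hcover, List.mem_toFinset]
  have h0 : 0 < L.length := by
    apply List.length_pos_of_mem (a := emb i j k (0, 0))
    rw [hL, mem_I3]
    exact ⟨(0, 0), by simp, rfl⟩
  set n := L.length with hn
  have hex : ∀ t : ℕ, ∃ u : Fin 3 × ℕ, u.2 ≤ (![i + 1, j + 1, k + 1] : Fin 3 → ℕ) u.1 ∧
      emb i j k u = L[t % n]'(Nat.mod_lt _ h0) := fun t =>
    (mem_I3 i j k _).1 ((hL _).1 (List.getElem_mem _))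
  choose v hv1 hv2 using hex
  rw [cycle_sum dist1 L (fun t => emb i j k (v t)) (fun t _ => hv2 t)]
  have hc := core ![i + 1, j + 1, k + 1]
    ![(j + 1) * (k + 1), (i + 1) * (k + 1), (i + 1) * (j + 1)] ((i + 1) * (j + 1) * (k + 1))
    (by intro c; fin_cases c <;> simp <;> ring)
    (by intro c; fin_cases c <;> simp) v n
    (by apply emb_inj i j k; rw [hv2, hv2]; simp) hv1
    (by
      intro c s hs
      have hm : emb i j k (c, s) ∈ L := by
        rw [hL, mem_I3]
        exact ⟨(c, s), hs, rfl⟩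
      obtain ⟨t, ht, e⟩ := List.getElem_of_mem hm
      refine ⟨t, ht, emb_inj i j k ?_⟩
      rw [hv2, ← e]
      have hm' : t % n = t := Nat.mod_eq_of_lt ht
      congr 1)
  have hc' : ((4 * ((i + 1) * (j + 1) * (k + 1)) + 2 * ∑ c, (![(j + 1) * (k + 1),
      (i + 1) * (k + 1), (i + 1) * (j + 1)] : Fin 3 → ℕ) c : ℕ) : ℝ) ≤ _ := Nat.cast_le.2 hc
  rw [Nat.cast_sum] at hc'
  simp_rw [← dist_emb] at hc'
  rw [← Finset.mul_sum] at hc'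
  have hN : (0 : ℝ) < (((i + 1) * (j + 1) * (k + 1) : ℕ) : ℝ) := by positivity
  refine le_of_mul_le_mul_left (le_trans (le_of_eq ?_) hc') hN
  rw [Fin.sum_univ_three]
  simp
  field_simp
  ring
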